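/- Let d ≥ 7, n = d(d+1)/2, and let τ be a partition of n with τ₁ ≤ n − d. Then the dimension vector v_𝛕 associated to the triple 𝛕 = (ξ_d, ξ_d, τ) is an imaginary root of the star-shaped graph Γ_𝛕, i.e. v_𝛕 lies in the Weyl group orbit of the set M of fundamental imaginary roots. -/

import Mathlib

/-!
Star-shaped graph with three legs of lengths `r 0`, `r 1`, `r 2`.
The vertex `none` is the central vertex `0`, and `some ⟨i, j⟩` is the
vertex `[i, j+1]` on the `i`-th leg.
-/

/-- Vertex set `I` of the star-shaped graph. -/
abbrev StarVertex (r : Fin 3 → ℕ) := Option ((i : Fin 3) × Fin (r i))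

/-- The entry `(e_u, e_w)` of the Cartan matrix of the star-shaped graph:
`2` on the diagonal, `-1` for adjacent vertices, `0` otherwise. -/
def cartan {r : Fin 3 → ℕ} : StarVertex r → StarVertex r → ℤ
  | none, none => 2
  | none, some p => if p.2.val = 0 then -1 else 0
  | some p, none => if p.2.val = 0 then -1 else 0
  | some p, some q =>
      if p.1 = q.1 then
        (if p.2.val = q.2.val then 2
         else if p.2.val + 1 = q.2.val ∨ q.2.val + 1 = p.2.val then -1 else 0)
      else 0

/-- The pairing `(e_u, v)` of a basis vector `e_u` with `v ∈ ℤ^I`. -/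
def pairing {r : Fin 3 → ℕ} (u : StarVertex r) (v : StarVertex r → ℤ) : ℤ :=
  ∑ w : StarVertex r, cartan u w * v w

/-- The fundamental reflection `s_u(v) = v - (v, e_u) e_u`. -/
def reflAt {r : Fin 3 → ℕ} (u : StarVertex r) (v : StarVertex r → ℤ) :
    StarVertex r → ℤ :=
  fun w => if w = u then v w - pairing u v else v w

/-- One direction of the edge relation of the star-shaped graph. -/
def legRel {r : Fin 3 → ℕ} : StarVertex r → StarVertex r → Prop
  | none, some p => p.2.val = 0
  | some p, some q => p.1 = q.1 ∧ p.2.val + 1 = q.2.val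
  | _, _ => False

/-- The star-shaped graph as a simple graph. -/
def starGraph (r : Fin 3 → ℕ) : SimpleGraph (StarVertex r) :=
  SimpleGraph.fromRel legRel

/-- `v ∈ M`: `v` is a fundamental imaginary root, i.e. `v ≠ 0`, the support of `v`
induces a connected subgraph, and `(e_u, v) ≤ 0` for every vertex `u`. -/
def IsFundImaginary {r : Fin 3 → ℕ} (v : StarVertex r → ℤ) : Prop :=
  v ≠ 0 ∧ (SimpleGraph.induce {u | v u ≠ 0} (starGraph r)).Connected ∧
    ∀ u : StarVertex r, pairing u v ≤ 0

/-- `y` lies in the Weyl-group orbit of `x` (every element of `W` is a word in the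
fundamental reflections, which are involutions). -/
def InWOrbit {r : Fin 3 → ℕ} (x y : StarVertex r → ℤ) : Prop :=
  ∃ l : List (StarVertex r), y = l.foldr reflAt x

/-- `y` lies in the orbit of `x` under the subgroup `H ≤ W` generated by the
reflections at the non-central vertices. -/
def InHOrbit {r : Fin 3 → ℕ} (x y : StarVertex r → ℤ) : Prop :=
  ∃ l : List ((i : Fin 3) × Fin (r i)), y = l.foldr (fun p => reflAt (some p)) x

/-- The coordinates of `v` read along the `i`-th leg: `coord v i 0 = v₀` is the
central coordinate, `coord v i j = v_{[i,j]}` for `1 ≤ j ≤ r i`, and `0` beyond. -/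
def coord {r : Fin 3 → ℕ} (v : StarVertex r → ℤ) (i : Fin 3) : ℕ → ℤ
  | 0 => v none
  | j + 1 => if h : j < r i then v (some ⟨i, ⟨j, h⟩⟩) else 0

/-- `δ(v) = v₀ - ∑_{i=1}^{3} (v₀ - v_{[i,1]})`. -/
def deltaInv {r : Fin 3 → ℕ} (v : StarVertex r → ℤ) : ℤ :=
  v none - ∑ i : Fin 3, (v none - coord v i 1)

/-- `v ∈ (ℕ^I)*`: the coordinates of `v` are nonnegative and non-increasing along
each leg: `v₀ ≥ v_{[i,1]} ≥ ⋯ ≥ v_{[i,r_i]} ≥ 0`. -/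
def InNStar {r : Fin 3 → ℕ} (v : StarVertex r → ℤ) : Prop :=
  ∀ (i : Fin 3) (j : ℕ), coord v i (j + 1) ≤ coord v i j

/-- The sequence `σ^i(v) = (v₀ - v_{[i,1]}, …, v_{[i,r_i-1]} - v_{[i,r_i]}, v_{[i,r_i]})`
of successive differences along the `i`-th leg (its entries are
`sigmaSeq v i 0, …, sigmaSeq v i (r i)`; it vanishes beyond). -/
def sigmaSeq {r : Fin 3 → ℕ} (v : StarVertex r → ℤ) (i : Fin 3) (j : ℕ) : ℤ :=
  coord v i j - coord v i (j + 1)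

/-- `v ∈ (ℕ^I)**`: `v ∈ (ℕ^I)*` and each `σ^i(v)` is non-increasing, i.e. `v = v_𝛍`
for a triple of partitions `𝛍`. -/
def InNStarStar {r : Fin 3 → ℕ} (v : StarVertex r → ℤ) : Prop :=
  InNStar v ∧ ∀ (i : Fin 3) (j : ℕ), sigmaSeq v i (j + 1) ≤ sigmaSeq v i j

/-- A partition of `n`: a non-increasing sequence `parts 0 ≥ parts 1 ≥ ⋯`
(`parts j` is the `(j+1)`-th part) with exactly `len` nonzero parts summing to `n`. -/
structure PartitionOf (n : ℕ) where
  parts : ℕ → ℕ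
  antitone : ∀ j : ℕ, parts (j + 1) ≤ parts j
  len : ℕ
  pos_of_lt : ∀ j < len, 0 < parts j
  zero_of_le : ∀ j : ℕ, len ≤ j → parts j = 0
  sum_parts : ∑ j ∈ Finset.range len, parts j = n

/-- The dimension vector `v_𝛍` of a triple of partitions of `n` whose parts are given
by `p 0, p 1, p 2`: coordinate `n` at the central vertex, and
`n - (μ^i_1 + ⋯ + μ^i_j)` at the vertex `[i, j]`. -/
def dimVec (r : Fin 3 → ℕ) (n : ℕ) (p : Fin 3 → ℕ → ℕ) : StarVertex r → ℤ
  | none => (n : ℤ)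
  | some q => (n : ℤ) - ∑ s ∈ Finset.range (q.2.val + 1), (p q.1 s : ℤ)

section Pairing

variable {r : Fin 3 → ℕ}

lemma sum_leg_ite_eq_coord (v : StarVertex r → ℤ) (i : Fin 3) (m : ℕ) :
    ∑ q : Fin (r i), (if q.val = m then v (some ⟨i, q⟩) else 0) = coord v i (m + 1) := by
  rw [coord]
  split_ifs with h
  · rw [Finset.sum_eq_single (⟨m, h⟩ : Fin (r i))]
    · simp
    · intro q _ hq
      rw [if_neg (fun hm => hq (Fin.ext hm))]
    · simp
  · exact Finset.sum_eq_zero fun q _ => if_neg (by have := q.isLt; omega)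

lemma pairing_none (v : StarVertex r → ℤ) :
    pairing none v = 2 * v none - ∑ i : Fin 3, coord v i 1 := by
  rw [pairing, Fintype.sum_option, Fintype.sum_sigma, sub_eq_add_neg, ← Finset.sum_neg_distrib]
  congr 1
  refine Finset.sum_congr rfl fun i _ => ?_
  rw [← sum_leg_ite_eq_coord, ← Finset.sum_neg_distrib]
  refine Finset.sum_congr rfl fun q _ => ?_
  simp only [cartan]
  split_ifs <;> ring

lemma pairing_some (v : StarVertex r → ℤ) (i : Fin 3) (j : Fin (r i)) :
    pairing (some ⟨i, j⟩) v =
      2 * coord v i (j.val + 1) - coord v i j.val - coord v i (j.val + 2) := by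
  have hleg : ∑ p : (i : Fin 3) × Fin (r i), cartan (some ⟨i, j⟩) (some p) * v (some p) =
      2 * coord v i (j.val + 1) - coord v i (j.val + 2) -
        ∑ q : Fin (r i), (if q.val + 1 = j.val then v (some ⟨i, q⟩) else 0) := by
    rw [Fintype.sum_sigma, Finset.sum_eq_single i]
    · rw [← sum_leg_ite_eq_coord, ← sum_leg_ite_eq_coord, Finset.mul_sum,
        ← Finset.sum_sub_distrib, ← Finset.sum_sub_distrib]
      refine Finset.sum_congr rfl fun q _ => ?_
      simp only [cartan, if_true]
      split_ifs <;> omega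
    · intro i' _ hi
      refine Finset.sum_eq_zero fun q _ => ?_
      simp [cartan, Ne.symm hi]
    · simp
  rw [pairing, Fintype.sum_option, hleg]
  rcases hj : j.val with _ | m
  · simp [cartan, hj, coord]
    ring
  · simp only [cartan, hj, Nat.add_right_cancel_iff, sum_leg_ite_eq_coord]
    simp
    ring

lemma coord_nonneg_of_inNStar {v : StarVertex r → ℤ} (hv : InNStar v) (i : Fin 3) (j : ℕ) :
    0 ≤ coord v i j := by
  have hanti : Antitone (coord v i) := antitone_nat_of_succ_le (hv i)
  have hend : coord v i (max j (r i) + 1) = 0 := by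
    rw [coord, dif_neg (by omega)]
  rw [← hend]
  exact hanti (by omega)

lemma isFundImaginary_of_inNStar {v : StarVertex r → ℤ} (hv : InNStar v) (h0 : 0 < v none)
    (hp : ∀ u, pairing u v ≤ 0) : IsFundImaginary v := by
  refine ⟨fun h => by simp [h] at h0, ?_, hp⟩
  rw [SimpleGraph.connected_iff_exists_forall_reachable]
  refine ⟨⟨none, h0.ne'⟩, ?_⟩
  have hreach : ∀ (i : Fin 3) (m : ℕ) (hm : m < r i) (hs : v (some ⟨i, ⟨m, hm⟩⟩) ≠ 0),
      (SimpleGraph.induce {u | v u ≠ 0} (starGraph r)).Reachable ⟨none, h0.ne'⟩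
        ⟨some ⟨i, ⟨m, hm⟩⟩, hs⟩ := by
    intro i m
    induction m with
    | zero =>
      intro hm hs
      apply SimpleGraph.Adj.reachable
      simp [starGraph, legRel]
    | succ m ih =>
      intro hm hs
      have h1 : coord v i (m + 2) = v (some ⟨i, ⟨m + 1, hm⟩⟩) := by rw [coord, dif_pos hm]
      have h2 : coord v i (m + 1) = v (some ⟨i, ⟨m, by omega⟩⟩) := by
        rw [coord, dif_pos (by omega)]
      have hle : coord v i (m + 2) ≤ coord v i (m + 1) := hv i (m + 1)
      have hnn := coord_nonneg_of_inNStar hv i (m + 2)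
      have hs' : v (some ⟨i, ⟨m, by omega⟩⟩) ≠ 0 := by
        rw [← h1] at hs
        rw [← h2]
        omega
      refine (ih (by omega) hs').trans (SimpleGraph.Adj.reachable ?_)
      simp [starGraph, legRel]
  rintro ⟨_ | ⟨i, j⟩, hu⟩
  · exact SimpleGraph.Reachable.refl _
  · exact hreach i j.val j.isLt hu

lemma reflAt_reflAt (u : StarVertex r) (v : StarVertex r → ℤ) :
    reflAt u (reflAt u v) = v := by
  have hu : cartan u u = 2 := by
    cases u <;> simp [cartan]
  have hp : pairing u (reflAt u v) = -pairing u v := by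
    have hsplit : ∀ w, cartan u w * reflAt u v w =
        cartan u w * v w - if w = u then 2 * pairing u v else 0 := by
      intro w
      rw [reflAt]
      split_ifs with h
      · rw [h, hu]
        ring
      · ring
    rw [pairing, Finset.sum_congr rfl fun w _ => hsplit w, Finset.sum_sub_distrib]
    simp only [Finset.sum_ite_eq', Finset.mem_univ, if_true]
    rw [← pairing]
    ring
  funext w
  rw [reflAt, hp]
  split_ifs with h <;> simp [reflAt, h]

lemma InWOrbit.refl (x : StarVertex r → ℤ) : InWOrbit x x := ⟨[], rfl⟩

lemma InWOrbit.trans {x y z : StarVertex r → ℤ} (hxy : InWOrbit x y) (hyz : InWOrbit y z) :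
    InWOrbit x z := by
  obtain ⟨l, rfl⟩ := hxy
  obtain ⟨k, rfl⟩ := hyz
  exact ⟨k ++ l, by rw [List.foldr_append]⟩

lemma inWOrbit_reflAt (u : StarVertex r) (x : StarVertex r → ℤ) : InWOrbit (reflAt u x) x :=
  ⟨[u], by simp [reflAt_reflAt]⟩

end Pairing

section LegVector

/-- The sum of the entries of `g` at positions smaller than `m`. -/
def partialSum {k : ℕ} (g : Fin k → ℤ) (m : ℕ) : ℤ :=
  ∑ s : Fin k, if s.val < m then g s else 0

lemma partialSum_zero {k : ℕ} (g : Fin k → ℤ) : partialSum g 0 = 0 := by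
  simp [partialSum]

lemma partialSum_succ {k : ℕ} (g : Fin k → ℤ) (m : ℕ) (hm : m < k) :
    partialSum g (m + 1) = partialSum g m + g ⟨m, hm⟩ := by
  have h : g ⟨m, hm⟩ = ∑ s : Fin k, if s = ⟨m, hm⟩ then g s else 0 := by simp
  rw [h, partialSum, partialSum, ← Finset.sum_add_distrib]
  refine Finset.sum_congr rfl fun s _ => ?_
  simp only [Fin.ext_iff]
  split_ifs <;> omega

lemma partialSum_of_le {k : ℕ} (g : Fin k → ℤ) (m : ℕ) (hm : k ≤ m) :
    partialSum g m = ∑ s, g s :=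
  Finset.sum_congr rfl fun s _ => if_pos (by omega)

lemma partialSum_coe {k : ℕ} (g : ℕ → ℤ) (m : ℕ) (hm : m ≤ k) :
    partialSum (fun s : Fin k => g s.val) m = ∑ s ∈ Finset.range m, g s := by
  induction m with
  | zero => simp [partialSum_zero]
  | succ m ih => rw [partialSum_succ _ _ (by omega), ih (by omega), Finset.sum_range_succ]

variable {r : Fin 3 → ℕ}

/-- The vector with central coordinate `N` whose successive differences along the `i`-th leg
are the entries of `f i`. -/
def legVec (N : ℤ) (f : ∀ i, Fin (r i + 1) → ℤ) : StarVertex r → ℤ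
  | none => N
  | some q => N - partialSum (f q.1) (q.2.val + 1)

/-- The differences along each leg add up to the central coordinate. -/
def LegBalanced (N : ℤ) (f : ∀ i, Fin (r i + 1) → ℤ) : Prop := ∀ i, ∑ s, f i s = N

lemma coord_legVec {N : ℤ} {f : ∀ i, Fin (r i + 1) → ℤ} (hf : LegBalanced N f) (i : Fin 3)
    (j : ℕ) : coord (legVec N f) i j = N - partialSum (f i) j := by
  rcases j with _ | j
  · simp [coord, legVec, partialSum_zero]
  · rw [coord]
    split_ifs with h
    · rfl
    · rw [partialSum_of_le _ _ (by omega), hf i, sub_self]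

lemma pairing_none_legVec {N : ℤ} {f : ∀ i, Fin (r i + 1) → ℤ} (hf : LegBalanced N f) :
    pairing none (legVec N f) = f 0 0 + f 1 0 + f 2 0 - N := by
  have h : ∀ i, coord (legVec N f) i 1 = N - f i 0 := fun i => by
    rw [coord_legVec hf, partialSum_succ _ 0 (by omega), partialSum_zero, zero_add]
    rfl
  rw [pairing_none, Fin.sum_univ_three, h, h, h, legVec]
  ring

lemma pairing_some_legVec {N : ℤ} {f : ∀ i, Fin (r i + 1) → ℤ} (hf : LegBalanced N f) (i : Fin 3)
    (j : Fin (r i)) : pairing (some ⟨i, j⟩) (legVec N f) = f i j.succ - f i j.castSucc := by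
  rw [pairing_some, coord_legVec hf, coord_legVec hf, coord_legVec hf,
    partialSum_succ _ (j.val + 1) (by omega), partialSum_succ _ j.val (by omega)]
  change _ = f i ⟨j.val + 1, _⟩ - f i ⟨j.val, _⟩
  ring

lemma partialSum_comp_swap {k : ℕ} (g : Fin (k + 1) → ℤ) (j : Fin k) (m : ℕ)
    (hm : m ≠ j.val + 1) :
    partialSum (g ∘ Equiv.swap j.castSucc j.succ) m = partialSum g m := by
  rw [partialSum, partialSum, ← Equiv.sum_comp (Equiv.swap j.castSucc j.succ)]
  refine Finset.sum_congr rfl fun s _ => ?_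
  simp only [Function.comp_apply, Equiv.swap_apply_self]
  refine if_congr ?_ rfl rfl
  rw [Equiv.swap_apply_def]
  split_ifs with h1 h2
  · simp [h1]; omega
  · simp [h2]; omega
  · rfl

lemma reflAt_some_legVec {N : ℤ} {f : ∀ i, Fin (r i + 1) → ℤ} (hf : LegBalanced N f) (i : Fin 3)
    (j : Fin (r i)) : reflAt (some ⟨i, j⟩) (legVec N f) =
      legVec N (Function.update f i (f i ∘ Equiv.swap j.castSucc j.succ)) := by
  funext w
  rw [reflAt, pairing_some_legVec hf]
  rcases w with _ | ⟨i', j'⟩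
  · simp [legVec]
  by_cases hi : i' = i
  · subst hi
    simp only [legVec, Function.update_self, Option.some.injEq, Sigma.mk.injEq, heq_eq_eq,
      true_and]
    split_ifs with hj
    · subst hj
      rw [partialSum_succ _ _ (by omega), partialSum_succ _ _ (by omega),
        partialSum_comp_swap _ _ _ (by omega)]
      have : (⟨j'.val, by omega⟩ : Fin (r i' + 1)) = j'.castSucc := rfl
      rw [this, Function.comp_apply, Equiv.swap_apply_left]
      ring
    · rw [partialSum_comp_swap _ _ _ (fun h => hj (Fin.ext (by omega)))]
  · simp [legVec, hi]

/-- The Weyl orbit of `legVec N f` meets the set of fundamental imaginary roots. -/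
def OrbitMeetsFund (N : ℤ) (f : ∀ i, Fin (r i + 1) → ℤ) : Prop :=
  ∃ v, IsFundImaginary v ∧ InWOrbit v (legVec N f)

lemma LegBalanced.update_comp {N : ℤ} {f : ∀ i, Fin (r i + 1) → ℤ} (hf : LegBalanced N f) (i : Fin 3)
    (σ : Equiv.Perm (Fin (r i + 1))) : LegBalanced N (Function.update f i (f i ∘ σ)) := by
  intro i'
  by_cases hi : i' = i
  · subst hi
    simp only [Function.update_self, Function.comp_apply]
    rw [Equiv.sum_comp σ (f i'), hf]
  · simp only [Function.update_of_ne hi, hf i']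

lemma LegBalanced.comp {N : ℤ} {f : ∀ i, Fin (r i + 1) → ℤ} (hf : LegBalanced N f)
    (σ : ∀ i, Equiv.Perm (Fin (r i + 1))) : LegBalanced N (fun i => f i ∘ σ i) := fun i => by
  simp only [Function.comp_apply]
  rw [Equiv.sum_comp (σ i) (f i), hf]

lemma inWOrbit_update_comp (i : Fin 3) (σ : Equiv.Perm (Fin (r i + 1))) (N : ℤ) :
    ∀ f : ∀ i, Fin (r i + 1) → ℤ, LegBalanced N f →
      InWOrbit (legVec N (Function.update f i (f i ∘ σ))) (legVec N f) := by
  have hσ : σ ∈ Submonoid.closure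
      (Set.range fun j : Fin (r i) => Equiv.swap j.castSucc j.succ) := by
    rw [Equiv.Perm.mclosure_swap_castSucc_succ]
    exact Submonoid.mem_top σ
  induction hσ using Submonoid.closure_induction with
  | mem x hx =>
    obtain ⟨j, rfl⟩ := hx
    intro f hf
    rw [← reflAt_some_legVec hf]
    exact inWOrbit_reflAt _ _
  | one =>
    intro f _
    have : f i ∘ (1 : Equiv.Perm (Fin (r i + 1))) = f i := rfl
    rw [this, Function.update_eq_self]
    exact InWOrbit.refl _
  | mul x y _ _ hx hy =>
    intro f hf
    have h := hy _ (hf.update_comp i x)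
    rw [Function.update_self, Function.update_idem] at h
    exact h.trans (hx f hf)

lemma inWOrbit_comp {N : ℤ} {f : ∀ i, Fin (r i + 1) → ℤ} (hf : LegBalanced N f)
    (σ : ∀ i, Equiv.Perm (Fin (r i + 1))) :
    InWOrbit (legVec N fun i => f i ∘ σ i) (legVec N f) := by
  have h0 := hf.update_comp 0 (σ 0)
  have h1 := h0.update_comp 1 (σ 1)
  have h := ((inWOrbit_update_comp 2 (σ 2) N _ h1).trans
    (inWOrbit_update_comp 1 (σ 1) N _ h0)).trans (inWOrbit_update_comp 0 (σ 0) N f hf)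
  convert h using 2
  funext i
  fin_cases i <;> simp [Function.update]

lemma OrbitMeetsFund.of_comp {N : ℤ} {f : ∀ i, Fin (r i + 1) → ℤ} (hf : LegBalanced N f)
    (σ : ∀ i, Equiv.Perm (Fin (r i + 1))) (h : OrbitMeetsFund N fun i => f i ∘ σ i) :
    OrbitMeetsFund N f :=
  let ⟨v, hv, hvo⟩ := h
  ⟨v, hv, hvo.trans (inWOrbit_comp hf σ)⟩

/-- The effect on the differences along the legs of lowering the central coordinate by `p`. -/
def lowerHeads (p : ℤ) (f : ∀ i, Fin (r i + 1) → ℤ) : ∀ i, Fin (r i + 1) → ℤ :=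
  fun i s => if s = 0 then f i s - p else f i s

lemma sum_lowerHeads (p : ℤ) (f : ∀ i, Fin (r i + 1) → ℤ) (i : Fin 3) :
    ∑ s, lowerHeads p f i s = ∑ s, f i s - p := by
  simp [lowerHeads, Fin.sum_univ_succ]
  ring

lemma LegBalanced.lowerHeads {N : ℤ} {f : ∀ i, Fin (r i + 1) → ℤ} (hf : LegBalanced N f) (p : ℤ) :
    LegBalanced (N - p) (lowerHeads p f) := fun i => by
  rw [sum_lowerHeads, hf]

lemma reflAt_none_legVec {N : ℤ} {f : ∀ i, Fin (r i + 1) → ℤ} (hf : LegBalanced N f) (p : ℤ)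
    (hp : p = f 0 0 + f 1 0 + f 2 0 - N) :
    reflAt none (legVec N f) = legVec (N - p) (lowerHeads p f) := by
  have hpart : ∀ i m, partialSum (lowerHeads p f i) (m + 1) = partialSum (f i) (m + 1) - p := by
    intro i m
    simp [partialSum, Fin.sum_univ_succ, lowerHeads]
    ring
  funext w
  rw [reflAt, pairing_none_legVec hf, ← hp]
  rcases w with _ | q
  · simp [legVec]
  · simp [legVec, hpart]

lemma OrbitMeetsFund.of_lowerHeads {N : ℤ} {f : ∀ i, Fin (r i + 1) → ℤ} (hf : LegBalanced N f)
    (p : ℤ) (hp : p = f 0 0 + f 1 0 + f 2 0 - N)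
    (h : OrbitMeetsFund (N - p) (lowerHeads p f)) : OrbitMeetsFund N f := by
  obtain ⟨v, hv, hvo⟩ := h
  rw [← reflAt_none_legVec hf p hp] at hvo
  exact ⟨v, hv, hvo.trans (inWOrbit_reflAt _ _)⟩

lemma exists_perm_antitone {k : ℕ} (g : Fin k → ℤ) :
    ∃ σ : Equiv.Perm (Fin k), Antitone (g ∘ σ) :=
  ⟨Tuple.sort (-g), fun a b hab => by
    have := Tuple.monotone_sort (-g) hab
    simpa using this⟩

lemma OrbitMeetsFund.of_bounds {N : ℤ} (hN : 0 < N) {f : ∀ i, Fin (r i + 1) → ℤ}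
    (hf : LegBalanced N f) (hnn : ∀ i s, 0 ≤ f i s) (M : Fin 3 → ℤ) (hM : ∀ i s, f i s ≤ M i)
    (hsum : M 0 + M 1 + M 2 ≤ N) : OrbitMeetsFund N f := by
  choose σ hσ using fun i => exists_perm_antitone (f i)
  have hg := hf.comp σ
  refine ⟨legVec N fun i => f i ∘ σ i, isFundImaginary_of_inNStar ?_ hN ?_,
    inWOrbit_comp hf σ⟩
  · intro i j
    rw [coord_legVec hg, coord_legVec hg]
    by_cases hj : j < r i + 1
    · rw [partialSum_succ _ _ hj]
      have := hnn i (σ i ⟨j, hj⟩)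
      simp only [Function.comp_apply]
      linarith
    · rw [partialSum_of_le _ _ (by omega), partialSum_of_le _ _ (by omega)]
  · rintro (_ | ⟨i, j⟩)
    · rw [pairing_none_legVec hg]
      have h0 := hM 0 (σ 0 0)
      have h1 := hM 1 (σ 1 0)
      have h2 := hM 2 (σ 2 0)
      simp only [Function.comp_apply]
      linarith
    · rw [pairing_some_legVec hg]
      have := hσ i (Fin.castSucc_lt_succ (i := j)).le
      linarith

end LegVector

section Staircase

/-- A staircase leg after `m` rounds of reflecting at the centre and bringing the next largest
entry to the front. -/
def staircaseLeg (d k : ℤ) (m s : ℕ) : ℤ :=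
  if s = 0 then d - m else if s ≤ m then d - k + s - 1 else d - s

/-- The sequence `t` with its first entry lowered by `k + (k - 2) + ⋯ + (k - 2 (m - 1))`. -/
def loweredLeg (k : ℤ) (t : ℕ → ℤ) (m s : ℕ) : ℤ :=
  if s = 0 then t 0 - m * k + m * (m - 1) else t s

/-- The differences along the three legs after `m` rounds. -/
def reducedLegs (r : Fin 3 → ℕ) (d k : ℤ) (t : ℕ → ℤ) (m : ℕ) : ∀ i, Fin (r i + 1) → ℤ :=
  fun i s => ![staircaseLeg d k m, staircaseLeg d k m, loweredLeg k t m] i s.val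

variable {r : Fin 3 → ℕ}

lemma reducedLegs_succ {d k : ℤ} {t : ℕ → ℤ} {m : ℕ} (h0 : m + 1 ≤ r 0) (h1 : m + 1 ≤ r 1) :
    (fun i => lowerHeads (k - 2 * m) (reducedLegs r d k t m) i ∘
      (if i = 2 then 1 else Equiv.swap 0 (Fin.ofNat (r i + 1) (m + 1)) :
        Equiv.Perm (Fin (r i + 1)))) = reducedLegs r d k t (m + 1) := by
  have hstair : ∀ (R : ℕ) (s : Fin (R + 1)), m + 1 ≤ R →
      (if Equiv.swap 0 (Fin.ofNat (R + 1) (m + 1)) s = 0 then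
        staircaseLeg d k m (Equiv.swap 0 (Fin.ofNat (R + 1) (m + 1)) s).val - (k - 2 * m)
        else staircaseLeg d k m (Equiv.swap 0 (Fin.ofNat (R + 1) (m + 1)) s).val) =
      staircaseLeg d k (m + 1) s.val := by
    intro R s hR
    obtain ⟨a, ha⟩ : ∃ a : Fin (R + 1), a.val = m + 1 := ⟨⟨m + 1, by omega⟩, rfl⟩
    have hofNat : Fin.ofNat (R + 1) (m + 1) = a := Fin.ext (by
      rw [ha, Fin.val_ofNat, Nat.mod_eq_of_lt (by omega)])
    have hne : a ≠ 0 := fun h => by simp [h] at ha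
    rw [hofNat]
    by_cases hs : s = 0
    · rw [hs, Equiv.swap_apply_left, if_neg hne, ha]
      simp [staircaseLeg]
    by_cases hsa : s = a
    · rw [hsa, Equiv.swap_apply_right, if_pos rfl, ha]
      simp [staircaseLeg]
      ring
    · rw [Equiv.swap_apply_of_ne_of_ne hs hsa, if_neg hs]
      have hs' : s.val ≠ 0 := fun h => hs (Fin.ext h)
      have hsa' : s.val ≠ m + 1 := fun h => hsa (Fin.ext (h.trans ha.symm))
      simp only [staircaseLeg]
      split_ifs <;> omega
  funext i s
  fin_cases i
  · exact hstair (r 0) s h0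
  · exact hstair (r 1) s h1
  · change (if s = 0 then loweredLeg k t m s.val - (k - 2 * m) else loweredLeg k t m s.val) =
      loweredLeg k t (m + 1) s.val
    by_cases hs : s = 0
    · simp [hs, loweredLeg]
      ring
    · have hs' : s.val ≠ 0 := fun h => hs (Fin.ext h)
      simp [hs, hs', loweredLeg]

lemma reducedLegs_step {d k n : ℤ} {t : ℕ → ℤ} (hk : k = t 0 - n + 2 * d) {m : ℕ}
    (h0 : m + 1 ≤ r 0) (h1 : m + 1 ≤ r 1)
    (hb : LegBalanced (n - m * k + m * (m - 1)) (reducedLegs r d k t m)) :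
    LegBalanced (n - (m + 1 : ℕ) * k + (m + 1 : ℕ) * ((m + 1 : ℕ) - 1))
      (reducedLegs r d k t (m + 1)) ∧
    (OrbitMeetsFund (n - (m + 1 : ℕ) * k + (m + 1 : ℕ) * ((m + 1 : ℕ) - 1))
      (reducedLegs r d k t (m + 1)) →
      OrbitMeetsFund (n - m * k + m * (m - 1)) (reducedLegs r d k t m)) := by
  have hN : n - (m + 1 : ℕ) * k + (m + 1 : ℕ) * ((m + 1 : ℕ) - 1) =
      n - m * k + m * (m - 1) - (k - 2 * m) := by
    push_cast
    ring
  have hb' := hb.lowerHeads (k - 2 * m)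
  rw [hN, ← reducedLegs_succ h0 h1]
  refine ⟨hb'.comp _, fun h => ?_⟩
  refine OrbitMeetsFund.of_lowerHeads hb (k - 2 * m) ?_ (OrbitMeetsFund.of_comp hb' _ h)
  simp [reducedLegs, staircaseLeg, loweredLeg]
  linarith

lemma reducedLegs_iterate {d k n : ℤ} {t : ℕ → ℤ} (hk : k = t 0 - n + 2 * d)
    (hb : LegBalanced n (reducedLegs r d k t 0)) {m : ℕ} (h0 : m ≤ r 0) (h1 : m ≤ r 1) :
    LegBalanced (n - m * k + m * (m - 1)) (reducedLegs r d k t m) ∧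
    (OrbitMeetsFund (n - m * k + m * (m - 1)) (reducedLegs r d k t m) →
      OrbitMeetsFund n (reducedLegs r d k t 0)) := by
  induction m with
  | zero => simpa using hb
  | succ m ih =>
    obtain ⟨hbm, hm⟩ := ih (by omega) (by omega)
    obtain ⟨hbm', hm'⟩ := reducedLegs_step hk h0 h1 hbm
    exact ⟨hbm', hm ∘ hm'⟩

lemma reducedLegs_of_bounds {d k n : ℤ} {t : ℕ → ℤ} (hk : k = t 0 - n + 2 * d)
    (hb : LegBalanced n (reducedLegs r d k t 0)) {m : ℕ} (h0 : (r 0 : ℤ) = d - 1)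
    (h1 : (r 1 : ℤ) = d - 1) (hmr : m + 1 ≤ d) (hkd : k ≤ d) (hkm : k ≤ 2 * m)
    (hmk : m = 0 ∨ 2 * m ≤ k + 1) (ht : ∀ s, 0 ≤ t s)
    (htail : ∀ s, s ≠ 0 → t s ≤ n - m * k + m * (m - 1) - 2 * (d - m))
    (hhead : 0 ≤ t 0 - m * k + m * (m - 1)) :
    OrbitMeetsFund n (reducedLegs r d k t 0) := by
  obtain ⟨hbm, hm⟩ := reducedLegs_iterate hk hb (m := m) (by omega) (by omega)
  have hstair : ∀ s : ℕ, (s : ℤ) ≤ d - 1 →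
      0 ≤ staircaseLeg d k m s ∧ staircaseLeg d k m s ≤ d - m := by
    intro s hs
    rw [staircaseLeg]
    split_ifs <;> omega
  have hlow : ∀ s : ℕ, 0 ≤ loweredLeg k t m s ∧
      loweredLeg k t m s ≤ n - m * k + m * (m - 1) - 2 * (d - m) := by
    intro s
    rw [loweredLeg]
    split_ifs with hs
    · exact ⟨hhead, by linarith⟩
    · exact ⟨ht s, htail s hs⟩
  have hall : ∀ i s, 0 ≤ reducedLegs r d k t m i s ∧ reducedLegs r d k t m i s ≤
      ![d - m, d - m, n - m * k + m * (m - 1) - 2 * (d - m)] i := by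
    intro i s
    have hs := s.isLt
    fin_cases i
    · exact hstair s.val (by simp at hs; omega)
    · exact hstair s.val (by simp at hs; omega)
    · exact hlow s.val
  refine hm (OrbitMeetsFund.of_bounds ?_ hbm (fun i s => (hall i s).1) _
    (fun i s => (hall i s).2) ?_)
  · have := (hlow 0).1.trans (hlow 0).2
    linarith
  · simp
    linarith

lemma orbitMeetsFund_seven {t : ℕ → ℤ} (ht0 : t 0 = 21) (ht1 : t 1 = 7)
    (hb : LegBalanced (r := ![6, 6, 1]) 28 (reducedLegs ![6, 6, 1] 7 7 t 0)) :
    OrbitMeetsFund (r := ![6, 6, 1]) 28 (reducedLegs ![6, 6, 1] 7 7 t 0) := by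
  obtain ⟨hb4, h4⟩ := reducedLegs_iterate (n := 28) (m := 4) (by rw [ht0]; norm_num) hb
    (by simp) (by simp)
  have heq : reducedLegs ![6, 6, 1] 7 7 t 4 = fun i s =>
      (![[3, 0, 1, 2, 3, 2, 1], [3, 0, 1, 2, 3, 2, 1], [5, 7]] i : List ℤ).getD s.val 0 := by
    funext i s
    fin_cases i <;> fin_cases s <;>
      simp [reducedLegs, staircaseLeg, loweredLeg, ht0, ht1]
  rw [heq] at hb4 h4
  apply h4
  norm_num at hb4 ⊢
  let σ : ∀ i, Equiv.Perm (Fin (![6, 6, 1] i + 1)) :=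
    fun i => if i = 2 then Equiv.swap 0 1 else 1
  let ρ : ∀ i, Equiv.Perm (Fin (![6, 6, 1] i + 1)) :=
    fun i => if i = 2 then 1 else Equiv.swap 0 4
  refine OrbitMeetsFund.of_comp hb4 σ ?_
  have hb5 := hb4.comp σ
  refine OrbitMeetsFund.of_lowerHeads hb5 1 (by decide) ?_
  refine OrbitMeetsFund.of_comp (hb5.lowerHeads 1) ρ ?_
  have hb6 := (hb5.lowerHeads 1).comp ρ
  refine OrbitMeetsFund.of_lowerHeads hb6 1 (by decide) ?_
  exact OrbitMeetsFund.of_bounds (by norm_num) (hb6.lowerHeads 1) (by decide) ![2, 2, 5]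
    (by decide) (by decide)

lemma staircase_tail_bound {d k n m : ℤ} (hd : 7 ≤ d) (hn : 2 * n = d * (d + 1))
    (hkd : k ≤ d) (hm : 1 ≤ m) (hmk : k = 2 * m ∨ k = 2 * m - 1)
    (hne : ¬ (d = 7 ∧ k = 7)) : 2 * d - k ≤ n - m * k + m * (m - 1) - 2 * (d - m) := by
  rcases hmk with rfl | rfl
  · rcases le_or_gt m 3 with h | h <;> nlinarith
  · rcases le_or_gt m 3 with h | h
    · nlinarith
    · rcases le_or_gt m 4 with h' | h'
      · obtain rfl : m = 4 := by omega
        have : 8 ≤ d := by omega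
        nlinarith
      · nlinarith

lemma two_mul_sum_staircase (d : ℕ) :
    2 * ∑ s ∈ Finset.range d, ((d : ℤ) - s) = d * (d + 1) := by
  have h := Finset.sum_range_reflect (fun s : ℕ => (s : ℤ) + 1) d
  have hg : ∑ s ∈ Finset.range d, ((d : ℤ) - s) = ∑ s ∈ Finset.range d, ((s : ℤ) + 1) := by
    rw [← h]
    refine Finset.sum_congr rfl fun s hs => ?_
    have := Finset.mem_range.mp hs
    omega
  rw [hg]
  clear h hg
  induction d with
  | zero => simp
  | succ d ih =>
    rw [Finset.sum_range_succ, mul_add, ih]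
    push_cast
    ring

lemma staircaseLeg_zero (d k : ℤ) : staircaseLeg d k 0 = fun s : ℕ => d - s := by
  funext s
  rw [staircaseLeg]
  split_ifs <;> simp_all

lemma loweredLeg_zero (k : ℤ) (t : ℕ → ℤ) : loweredLeg k t 0 = t := by
  funext s
  rw [loweredLeg]
  split_ifs with h <;> simp [h]

lemma legBalanced_reducedLegs_zero {d : ℕ} {k n : ℤ} {t : ℕ → ℤ} (hn : 2 * n = d * (d + 1))
    (h0 : r 0 + 1 = d) (h1 : r 1 + 1 = d) (ht : ∑ s ∈ Finset.range (r 2 + 1), t s = n) :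
    LegBalanced n (reducedLegs r d k t 0) := by
  have hsum := two_mul_sum_staircase d
  have hstair : ∀ R, R + 1 = d → ∑ s : Fin (R + 1), staircaseLeg d k 0 s.val = n := by
    rintro R rfl
    rw [staircaseLeg_zero, Fin.sum_univ_eq_sum_range (fun s => ((R + 1 : ℕ) : ℤ) - s)]
    linarith
  intro i
  fin_cases i
  · exact hstair _ h0
  · exact hstair _ h1
  · change ∑ s : Fin (r 2 + 1), loweredLeg k t 0 s.val = n
    rw [loweredLeg_zero, Fin.sum_univ_eq_sum_range]
    exact ht

lemma dimVec_eq_legVec_reducedLegs {d n : ℕ} {k : ℤ} {p : ℕ → ℕ} (h0 : r 0 ≤ d) (h1 : r 1 ≤ d) :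
    dimVec r n ![fun s => d - s, fun s => d - s, p] =
      legVec (n : ℤ) (reducedLegs r d k (fun s => (p s : ℤ)) 0) := by
  have hstair : ∀ R : ℕ, R ≤ d → ∀ j : Fin R,
      ∑ s ∈ Finset.range (j.val + 1), ((d - s : ℕ) : ℤ) =
        partialSum (fun s : Fin (R + 1) => staircaseLeg d k 0 s.val) (j.val + 1) := by
    intro R hR j
    rw [partialSum_coe _ _ (by omega), staircaseLeg_zero]
    refine Finset.sum_congr rfl fun s hs => Nat.cast_sub ?_
    have := Finset.mem_range.mp hs
    omega
  funext w
  rcases w with _ | ⟨i, j⟩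
  · rfl
  rw [dimVec, legVec]
  congr 1
  fin_cases i
  · exact hstair _ h0 j
  · exact hstair _ h1 j
  · change _ =
      partialSum (fun s : Fin (r 2 + 1) => loweredLeg k (fun s => (p s : ℤ)) 0 s.val) (j.val + 1)
    rw [loweredLeg_zero]
    exact (partialSum_coe (fun s => (p s : ℤ)) _ (Nat.succ_le_succ j.isLt.le)).symm

end Staircase

lemma PartitionOf.antitone_parts {n : ℕ} (τ : PartitionOf n) : Antitone τ.parts :=
  antitone_nat_of_succ_le τ.antitone

lemma PartitionOf.add_le_of_ne_zero {n : ℕ} (τ : PartitionOf n) {s : ℕ} (hs : s ≠ 0) :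
    τ.parts 0 + τ.parts s ≤ n := by
  by_cases hl : s < τ.len
  · rw [← Finset.sum_pair (f := τ.parts) (Ne.symm hs)]
    refine le_of_le_of_eq ?_ τ.sum_parts
    refine Finset.sum_le_sum_of_subset fun x hx => ?_
    simp only [Finset.mem_insert, Finset.mem_singleton] at hx
    rw [Finset.mem_range]
    omega
  · rw [τ.zero_of_le s (by omega), add_zero]
    by_cases h0 : 0 < τ.len
    · refine le_of_le_of_eq ?_ τ.sum_parts
      exact Finset.single_le_sum (f := τ.parts) (fun _ _ => Nat.zero_le _)
        (Finset.mem_range.mpr h0)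
    · rw [τ.zero_of_le 0 (by omega)]
      exact Nat.zero_le _

lemma PartitionOf.len_eq_two {n : ℕ} (τ : PartitionOf n) (h1 : 0 < τ.parts 1)
    (h : τ.parts 0 + τ.parts 1 = n) : τ.len = 2 := by
  have hlen : 2 ≤ τ.len := by
    by_contra hlt
    rw [τ.zero_of_le 1 (by omega)] at h1
    exact lt_irrefl _ h1
  by_contra hne
  have h2 := τ.pos_of_lt 2 (by omega)
  have hsub : ∑ j ∈ Finset.range 3, τ.parts j ≤ n := by
    refine le_of_le_of_eq ?_ τ.sum_parts
    exact Finset.sum_le_sum_of_subset (Finset.range_subset_range.mpr (by omega))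
  simp only [Finset.sum_range_succ, Finset.sum_range_zero] at hsub
  omega

/-- If `d ≥ 7` and `τ₁ ≤ n - d` then the dimension vector of `(ξ_d, ξ_d, τ)` is an
imaginary root of `Γ_𝛕`: it lies in the Weyl-group orbit of the set `M` of
fundamental imaginary roots. -/
theorem staircase_dimVec_imaginary (d : ℕ) (hd : 7 ≤ d) (n : ℕ)
    (hn : n = d * (d + 1) / 2) (τ : PartitionOf n)
    (hτ : (τ.parts 0 : ℤ) ≤ (n : ℤ) - d) :
    ∃ v : StarVertex ![d - 1, d - 1, τ.len - 1] → ℤ,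
      IsFundImaginary v ∧
      InWOrbit v
        (dimVec ![d - 1, d - 1, τ.len - 1] n
          ![fun s => d - s, fun s => d - s, τ.parts]) := by
  have hn2 : 2 * (n : ℤ) = d * (d + 1) := by
    have h := Nat.mul_div_cancel' (Nat.even_mul_succ_self d).two_dvd
    rw [hn]
    exact_mod_cast h
  have hlen : 0 < τ.len := by
    by_contra h
    have hs := τ.sum_parts
    rw [Nat.eq_zero_of_not_pos h, Finset.sum_range_zero] at hs
    rw [← hs] at hn2
    push_cast at hn2
    nlinarith
  obtain ⟨k, hk⟩ : ∃ k : ℤ, k = (τ.parts 0 : ℤ) - n + 2 * d := ⟨_, rfl⟩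
  rw [dimVec_eq_legVec_reducedLegs (k := k) (by simp) (by simp)]
  change OrbitMeetsFund _ _
  have hb : LegBalanced (r := ![d - 1, d - 1, τ.len - 1]) (n : ℤ)
      (reducedLegs _ d k (fun s => (τ.parts s : ℤ)) 0) := by
    refine legBalanced_reducedLegs_zero hn2 (Nat.sub_add_cancel (by omega))
      (Nat.sub_add_cancel (by omega)) ?_
    change ∑ s ∈ Finset.range (τ.len - 1 + 1), (τ.parts s : ℤ) = n
    rw [Nat.sub_add_cancel hlen]
    exact_mod_cast τ.sum_parts
  have hr : ((d - 1 : ℕ) : ℤ) = d - 1 := by omega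
  have hkd : k ≤ d := by omega
  have htail : ∀ s, s ≠ 0 → (τ.parts s : ℤ) ≤ 2 * d - k := fun s hs => by
    have := τ.add_le_of_ne_zero hs
    omega
  have hnn : ∀ s, (0 : ℤ) ≤ τ.parts s := fun s => Int.natCast_nonneg _
  rcases le_or_gt k 0 with hk0 | hk0
  · refine reducedLegs_of_bounds (m := 0) hk hb hr hr (by omega) hkd (by simpa using hk0)
      (Or.inl rfl) hnn (fun s _ => ?_) (by simp)
    have := τ.antitone_parts (Nat.zero_le s)
    push_cast
    omega
  obtain ⟨m, hm⟩ : ∃ m : ℕ, k = 2 * m ∨ k = 2 * (m : ℤ) - 1 :=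
    ⟨((k + 1) / 2).toNat, by omega⟩
  by_cases hexc : (d : ℤ) = 7 ∧ k = 7
  · obtain ⟨hd7, rfl⟩ := hexc
    obtain rfl : d = 7 := by exact_mod_cast hd7
    obtain rfl : n = 28 := by omega
    obtain rfl : m = 4 := by omega
    by_cases h7 : τ.parts 1 = 7
    · have h0 : τ.parts 0 = 21 := by omega
      have hl := τ.len_eq_two (by omega) (by omega)
      rw [hl] at hb ⊢
      exact orbitMeetsFund_seven (by simp [h0]) (by simp [h7]) hb
    · have h1 := htail 1 one_ne_zero
      refine reducedLegs_of_bounds (m := 4) hk hb hr hr (by norm_num) hkd (by norm_num)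
        (Or.inr (by norm_num)) hnn (fun s hs => ?_) (by push_cast at hk ⊢; omega)
      have := τ.antitone_parts (Nat.one_le_iff_ne_zero.mpr hs)
      push_cast
      omega
  · have hbound := staircase_tail_bound (by omega) hn2 hkd (by omega) hm hexc
    refine reducedLegs_of_bounds hk hb hr hr (m := m) (by omega) hkd (by omega)
      (Or.inr (by omega)) hnn (fun s hs => (htail s hs).trans hbound) ?_
    linarith [show (2 : ℤ) * m ≤ 2 * d by omega]
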